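/- Let k ≥ 2, η ≥ 0, and r ∈ ℂᵏ. Let R be a k×k Hermitian positive semidefinite complex matrix such that: (a) |R_{ij} − r_i·conj(r_j)| ≤ 2η for all i ≠ j; (b) Σ_i Re(R_{ii}) ≤ Σ_i |r_i|²; (c) there exists an index i₀ with Re(R_{i₀ i₀}) ≥ |r_{i₀}|² − k·η and Re(R_{jj}) ≥ |r_j|² − 2η for all j ≠ i₀. Then the squared Frobenius distance satisfies Σ_{i,j} |R_{ij} − r_i·conj(r_j)|² ≤ 16·k²·η². -/

import Mathlib

open Complex
open scoped ComplexOrder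

/-!
Write `E = R - r r*`. The off-diagonal entries of `E` are bounded by hypothesis. Its diagonal is a
real vector `d` with `-b ≤ d` for a known `b ≥ 0` and `∑ d ≤ 0`: the entries of `d + b` are
nonnegative and add up to at most `∑ b`, so the one-sided bound on `d` already controls `∑ d ^ 2`.
-/

section ErrorMatrix

variable {ι : Type*}

theorem sum_sq_le_sum_sq_add_sq_sum_of_sum_nonpos {α : Type*} [CommRing α] [LinearOrder α]
    [IsStrictOrderedRing α] {s : Finset ι} {b d : ι → α} (hb : ∀ i ∈ s, 0 ≤ b i)
    (hbd : ∀ i ∈ s, -b i ≤ d i) (hd : ∑ i ∈ s, d i ≤ 0) :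
    ∑ i ∈ s, d i ^ 2 ≤ ∑ i ∈ s, b i ^ 2 + (∑ i ∈ s, b i) ^ 2 := by
  have hadd : ∀ i ∈ s, 0 ≤ d i + b i := fun i hi ↦ neg_le_iff_add_nonneg.mp (hbd i hi)
  have hsum : ∑ i ∈ s, (d i + b i) ≤ ∑ i ∈ s, b i := by
    rw [Finset.sum_add_distrib]
    exact add_le_of_nonpos_left hd
  calc
    ∑ i ∈ s, d i ^ 2 ≤ ∑ i ∈ s, (b i ^ 2 + (d i + b i) ^ 2) :=
      Finset.sum_le_sum fun i hi ↦ by linarith [mul_nonneg (hadd i hi) (hb i hi)]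
    _ = ∑ i ∈ s, b i ^ 2 + ∑ i ∈ s, (d i + b i) ^ 2 := Finset.sum_add_distrib
    _ ≤ ∑ i ∈ s, b i ^ 2 + (∑ i ∈ s, (d i + b i)) ^ 2 := by
      gcongr
      exact Finset.sum_sq_le_sq_sum_of_nonneg hadd
    _ ≤ ∑ i ∈ s, b i ^ 2 + (∑ i ∈ s, b i) ^ 2 := by
      gcongr
      exact Finset.sum_nonneg hadd

variable [Fintype ι]

theorem sum_le_add_card_sub_one_mul {α : Type*} [Ring α] [PartialOrder α] [IsOrderedRing α]
    {f : ι → α} {a : α} (i : ι) (h : ∀ j, j ≠ i → f j ≤ a) :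
    ∑ j, f j ≤ f i + (Fintype.card ι - 1) * a := by
  classical
  have hcard : ((Finset.univ.erase i).card : α) = Fintype.card ι - 1 :=
    Finset.cast_card_erase_of_mem (Finset.mem_univ i)
  rw [← Finset.add_sum_erase _ f (Finset.mem_univ i), ← hcard, ← nsmul_eq_mul]
  gcongr
  exact Finset.sum_le_card_nsmul _ _ _ fun j hj ↦ h j (Finset.ne_of_mem_erase hj)

theorem sum_sum_norm_sq_le_sum_diag_add {F : Type*} [SeminormedAddCommGroup F]
    {E : Matrix ι ι F} {δ : ℝ} (hoff : ∀ i j, i ≠ j → ‖E i j‖ ≤ δ) :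
    ∑ i, ∑ j, ‖E i j‖ ^ 2 ≤
      ∑ i, ‖E i i‖ ^ 2 + Fintype.card ι * ((Fintype.card ι - 1) * δ ^ 2) := by
  have hrow (i : ι) :
      ∑ j, ‖E i j‖ ^ 2 ≤ ‖E i i‖ ^ 2 + (Fintype.card ι - 1) * δ ^ 2 :=
    sum_le_add_card_sub_one_mul i fun j hj ↦ by
      gcongr
      exact hoff i j hj.symm
  calc
    ∑ i, ∑ j, ‖E i j‖ ^ 2 ≤ ∑ i, (‖E i i‖ ^ 2 + (Fintype.card ι - 1) * δ ^ 2) :=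
      Finset.sum_le_sum fun i _ ↦ hrow i
    _ = ∑ i, ‖E i i‖ ^ 2 + Fintype.card ι * ((Fintype.card ι - 1) * δ ^ 2) := by
      rw [Finset.sum_add_distrib, Finset.sum_const, Finset.card_univ, nsmul_eq_mul]

variable {𝕜 : Type*} [RCLike 𝕜]

theorem norm_sq_eq_re_sq_of_isSelfAdjoint {z : 𝕜} (hz : IsSelfAdjoint z) :
    ‖z‖ ^ 2 = RCLike.re z ^ 2 := by
  rw [← RCLike.conj_eq_iff_re.mp hz, RCLike.norm_ofReal, sq_abs, RCLike.ofReal_re]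

theorem sum_sum_norm_sq_le_of_neg_le_re_diag {E : Matrix ι ι 𝕜}
    (hE : ∀ i, IsSelfAdjoint (E i i)) {δ : ℝ} (hoff : ∀ i j, i ≠ j → ‖E i j‖ ≤ δ)
    (htr : ∑ i, RCLike.re (E i i) ≤ 0) {b : ι → ℝ} (hb : ∀ i, 0 ≤ b i)
    (hdiag : ∀ i, -b i ≤ RCLike.re (E i i)) :
    ∑ i, ∑ j, ‖E i j‖ ^ 2 ≤
      ∑ i, b i ^ 2 + (∑ i, b i) ^ 2 + Fintype.card ι * ((Fintype.card ι - 1) * δ ^ 2) :=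
  calc
    ∑ i, ∑ j, ‖E i j‖ ^ 2 ≤
        ∑ i, ‖E i i‖ ^ 2 + Fintype.card ι * ((Fintype.card ι - 1) * δ ^ 2) :=
      sum_sum_norm_sq_le_sum_diag_add hoff
    _ = ∑ i, RCLike.re (E i i) ^ 2 + Fintype.card ι * ((Fintype.card ι - 1) * δ ^ 2) := by
      simp only [norm_sq_eq_re_sq_of_isSelfAdjoint (hE _)]
    _ ≤ ∑ i, b i ^ 2 + (∑ i, b i) ^ 2 + Fintype.card ι * ((Fintype.card ι - 1) * δ ^ 2) := by
      gcongr
      exact sum_sq_le_sum_sq_add_sq_sum_of_sum_nonpos (fun i _ ↦ hb i) (fun i _ ↦ hdiag i) htr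

theorem sum_sum_norm_sq_le_of_neg_le_re_diag_of_ne {E : Matrix ι ι 𝕜}
    (hE : ∀ i, IsSelfAdjoint (E i i)) {δ : ℝ} (hoff : ∀ i j, i ≠ j → ‖E i j‖ ≤ δ)
    (htr : ∑ i, RCLike.re (E i i) ≤ 0) {β γ : ℝ} (hβ : 0 ≤ β) (hγ : 0 ≤ γ) {i₀ : ι}
    (hself : -β ≤ RCLike.re (E i₀ i₀)) (hne : ∀ j, j ≠ i₀ → -γ ≤ RCLike.re (E j j)) :
    ∑ i, ∑ j, ‖E i j‖ ^ 2 ≤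
      β ^ 2 + (Fintype.card ι - 1) * γ ^ 2 + (β + (Fintype.card ι - 1) * γ) ^ 2 +
        Fintype.card ι * ((Fintype.card ι - 1) * δ ^ 2) := by
  classical
  let b : ι → ℝ := Function.update (fun _ ↦ γ) i₀ β
  have hb_self : b i₀ = β := Function.update_self ..
  have hb_ne (j : ι) (hj : j ≠ i₀) : b j = γ := Function.update_of_ne hj ..
  have hb_nonneg (i : ι) : 0 ≤ b i := by
    obtain rfl | hi := eq_or_ne i i₀
    · exact hb_self ▸ hβ
    · exact hb_ne i hi ▸ hγ
  have hb_diag (i : ι) : -b i ≤ RCLike.re (E i i) := by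
    obtain rfl | hi := eq_or_ne i i₀
    · exact hb_self ▸ hself
    · exact hb_ne i hi ▸ hne i hi
  have hb_sum : ∑ i, b i ≤ β + (Fintype.card ι - 1) * γ :=
    hb_self ▸ sum_le_add_card_sub_one_mul i₀ fun j hj ↦ (hb_ne j hj).le
  have hb_sum_sq : ∑ i, b i ^ 2 ≤ β ^ 2 + (Fintype.card ι - 1) * γ ^ 2 :=
    hb_self ▸ sum_le_add_card_sub_one_mul i₀ fun j hj ↦ by rw [hb_ne j hj]
  refine (sum_sum_norm_sq_le_of_neg_le_re_diag hE hoff htr hb_nonneg hb_diag).trans ?_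
  gcongr
  exact Finset.sum_nonneg fun i _ ↦ hb_nonneg i

theorem frobenius_error_bound_general {η : ℝ} (hη : 0 ≤ η) (r : ι → 𝕜) (R : Matrix ι ι 𝕜)
    (hR : ∀ i, IsSelfAdjoint (R i i))
    (hoff : ∀ i j, i ≠ j → ‖R i j - r i * (starRingEnd 𝕜) (r j)‖ ≤ 2 * η)
    (htr : ∑ i, RCLike.re (R i i) ≤ ∑ i, ‖r i‖ ^ 2)
    (hdiag : ∃ i₀, ‖r i₀‖ ^ 2 - Fintype.card ι * η ≤ RCLike.re (R i₀ i₀) ∧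
      ∀ j, j ≠ i₀ → ‖r j‖ ^ 2 - 2 * η ≤ RCLike.re (R j j)) :
    ∑ i, ∑ j, ‖R i j - r i * (starRingEnd 𝕜) (r j)‖ ^ 2 ≤
      16 * (Fintype.card ι : ℝ) ^ 2 * η ^ 2 := by
  obtain ⟨i₀, hself, hne⟩ := hdiag
  set n : ℝ := (Fintype.card ι : ℝ)
  have hn : 0 ≤ n := Nat.cast_nonneg _
  let E : Matrix ι ι 𝕜 := R - Matrix.vecMulVec r (star r)
  have hE (i : ι) : IsSelfAdjoint (E i i) := (hR i).sub (.mul_star_self (r i))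
  have hE_re (i : ι) : RCLike.re (E i i) = RCLike.re (R i i) - ‖r i‖ ^ 2 := by
    change RCLike.re (R i i - r i * (starRingEnd 𝕜) (r i)) = _
    rw [RCLike.mul_conj, map_sub, ← RCLike.ofReal_pow, RCLike.ofReal_re]
  have hE_tr : ∑ i, RCLike.re (E i i) ≤ 0 := by
    simpa only [hE_re, Finset.sum_sub_distrib, sub_nonpos] using htr
  calc
    ∑ i, ∑ j, ‖E i j‖ ^ 2 ≤
        (n * η) ^ 2 + (n - 1) * (2 * η) ^ 2 + (n * η + (n - 1) * (2 * η)) ^ 2 +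
          n * ((n - 1) * (2 * η) ^ 2) :=
      sum_sum_norm_sq_le_of_neg_le_re_diag_of_ne hE hoff hE_tr
        (by positivity) (by positivity) (i₀ := i₀) (by linarith [hE_re i₀])
        fun j hj ↦ by linarith [hE_re j, hne j hj]
    _ = (14 * n ^ 2 - 12 * n) * η ^ 2 := by ring
    _ ≤ 16 * n ^ 2 * η ^ 2 := by
      gcongr
      linarith [sq_nonneg n]

end ErrorMatrix

/-- Let `k ≥ 2`, `η ≥ 0`, `r ∈ ℂᵏ` and let `R` be a Hermitian positive semidefinite matrix
with (a) `|R_{ij} − r_i conj(r_j)| ≤ 2η` off the diagonal, (b) `Σ Re(R_{ii}) ≤ Σ |r_i|²`, and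
(c) some index `i₀` with `Re(R_{i₀i₀}) ≥ |r_{i₀}|² − kη` and `Re(R_{jj}) ≥ |r_j|² − 2η` for
`j ≠ i₀`.  Then the squared Frobenius distance from `R` to `r r*` is at most `16 k² η²`. -/
theorem frobenius_error_bound
    (k : ℕ) (hk : 2 ≤ k) (η : ℝ) (hη : 0 ≤ η) (r : Fin k → ℂ)
    (R : Matrix (Fin k) (Fin k) ℂ) (hR : R.PosSemidef)
    (hoff : ∀ i j, i ≠ j → ‖R i j - r i * (starRingEnd ℂ) (r j)‖ ≤ 2 * η)
    (htr : ∑ i, (R i i).re ≤ ∑ i, ‖r i‖ ^ 2)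
    (hdiag : ∃ i₀ : Fin k, ‖r i₀‖ ^ 2 - k * η ≤ (R i₀ i₀).re ∧
      ∀ j, j ≠ i₀ → ‖r j‖ ^ 2 - 2 * η ≤ (R j j).re) :
    ∑ i, ∑ j, ‖R i j - r i * (starRingEnd ℂ) (r j)‖ ^ 2 ≤ 16 * k ^ 2 * η ^ 2 := by
  simpa using frobenius_error_bound_general hη r R (fun i ↦ hR.isHermitian.apply i i) hoff htr
    (by simpa using hdiag)
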